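/- Transformed key equation with errors, row erasures and column erasures: In the erasure-decoding setting (with n = m, normal basis element β, dual normal basis element β⊥, g_j = (β⊥)^{q^j}, error decomposition e^(i) = a^(i,R)·B^(i,R) + a^(i,C)·B^(C) + a^(i,E)·B^(E), interpolation polynomials ẽ^(i), elements d^(C)_l = Σ_j B^(C)_{l,j} β^{q^j}, and minimal annihilator polynomials Γ^(C), Λ^(i,R), Λ^(i,E)), the following holds for every i = 1,…,s: the composition Λ^(i,E)(Λ^(i,R)(ẽ^(i)(Γ̃^(C)(x)))) is congruent to 0 modulo x^{q^m} − x, where Γ̃^(C) is the full q-reverse of Γ^(C); equivalently, Λ^(i,E)(Λ^(i,R)(ẽ^(i)(Γ̃^(C)(α)))) = 0 for every α ∈ 𝔽_{q^m}. -/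

import Mathlib

/-!
The full `q`-reverse is the adjoint for the trace form: `Tr (Γ(d) * x) = Tr (d * Γ̃(x))`
(`trace_qEval_mul`), because the Frobenius preserves the trace and `i + ((m - i) mod m)` is
`0` or `m`. Hence `y = Γ̃(x)` is trace-orthogonal to every `d_l`, as `Γ(d_l) = 0`.

Expanding `y` in the dual normal basis gives `y = ∑ j, Tr (β^{q^j} * y) • g_j`
(`sum_trace_smul_dual`), so by `𝔽_q`-linearity `ẽ(y) = ∑ j, Tr (β^{q^j} * y) • e_j`. In it the
coefficient of `a^(C)_l` is `Tr (d_l * y) = 0`, so `ẽ(y)` lies in the `𝔽_q`-span of the `a^(R)_l`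
and the `a^(E)_l`, which is killed by `Λ^(R)` followed by `Λ^(E)`.
-/

/-- Evaluation of the linearized polynomial with coefficient sequence `c`
(finitely supported) at `x`: `∑ i, c i * x ^ (q ^ i)`. -/
noncomputable def qEval {K : Type*} [Field K] (q : ℕ) (c : ℕ → K) (x : K) : K :=
  ∑ᶠ i, c i * x ^ q ^ i

/-- The q-degree of a linearized polynomial given by its (finitely supported)
coefficient sequence. -/
noncomputable def qDegree {K : Type*} [Field K] (p : ℕ → K) : ℕ :=
  sSup {i | p i ≠ 0}

/-- The full `q`-reverse of a linearized polynomial `p(x) = ∑_{i<m} p_i x^{q^i}`: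
`p̃_i = (p_{(−i) mod m})^{q^i}` for `i < m`. -/
noncomputable def qReverse {K : Type*} [Field K] (q m : ℕ) (p : ℕ → K) : ℕ → K :=
  fun i => if i < m then (p ((m - i) % m)) ^ q ^ i else 0

theorem qEval_eq_sum {K : Type*} [Field K] (q D : ℕ) (c : ℕ → K) (hc : ∀ j, D ≤ j → c j = 0)
    (x : K) : qEval q c x = ∑ i ∈ Finset.range D, c i * x ^ q ^ i := by
  unfold qEval
  refine finsum_eq_sum_of_support_subset _ fun i hi => ?_
  by_contra h
  simp only [Finset.coe_range, Set.mem_Iio, not_lt] at h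
  exact hi (by simp [hc i h])

section Field

variable {Fq K : Type*} [Field Fq] [Fintype Fq] [Field K] [Algebra Fq K]

theorem frobenius_pow_apply (i : ℕ) (x : K) :
    ((FiniteField.frobeniusAlgHom Fq K) ^ i) x = x ^ Fintype.card Fq ^ i := by
  induction i generalizing x with
  | zero => simp
  | succ i ih =>
    rw [pow_succ, AlgHom.mul_apply, ih, FiniteField.frobeniusAlgHom_apply, ← pow_mul,
      pow_succ' (Fintype.card Fq)]

/-- Finite support is needed: otherwise `qEval` is a junk-valued `finsum`. -/
theorem qEval_linear (q : ℕ) (hq : q = Fintype.card Fq) (c : ℕ → K)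
    (hc : ∃ D, ∀ j, D ≤ j → c j = 0) : ∃ f : K →ₗ[Fq] K, ∀ x, qEval q c x = f x := by
  obtain ⟨D, hD⟩ := hc
  refine ⟨∑ i ∈ Finset.range D,
    c i • ((FiniteField.frobeniusAlgHom Fq K) ^ i).toLinearMap, fun x => ?_⟩
  rw [qEval_eq_sum q D c hD]
  simp [LinearMap.sum_apply, frobenius_pow_apply, hq]

theorem trace_pow_card [Finite K] (i : ℕ) (x : K) :
    Algebra.trace Fq K (x ^ Fintype.card Fq ^ i) = Algebra.trace Fq K x := by
  induction i with
  | zero => simp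
  | succ i ih =>
    rw [pow_succ, pow_mul, ← ih]
    exact Algebra.trace_eq_of_algEquiv (FiniteField.frobeniusAlgEquivOfAlgebraic Fq K) _

/-- The full `q`-reverse is the adjoint of a linearized polynomial for the trace form. -/
theorem trace_qEval_mul [Finite K] (q m : ℕ) (hq : q = Fintype.card Fq)
    (hm : Module.finrank Fq K = m) (Γ : ℕ → K) (hΓ : ∀ j, m ≤ j → Γ j = 0) (d x : K) :
    Algebra.trace Fq K (qEval q Γ d * x)
      = Algebra.trace Fq K (d * qEval q (qReverse q m Γ) x) := by
  have hcard : ∀ y : K, y ^ q ^ m = y := by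
    intro y
    have : Fintype K := Fintype.ofFinite K
    rw [hq, ← hm, ← Module.card_eq_pow_finrank (K := Fq) (V := K)]
    exact FiniteField.pow_card y
  rw [qEval_eq_sum q m Γ hΓ, qEval_eq_sum q m (qReverse q m Γ)
    (fun j hj => by simp [qReverse, Nat.not_lt.mpr hj]), Finset.sum_mul, Finset.mul_sum, map_sum,
    map_sum]
  have hinv : ∀ i < m, (m - i) % m < m ∧ (m - (m - i) % m) % m = i ∧
      ((m - i) % m + i = 0 ∨ (m - i) % m + i = m) := by
    intro i hi
    rcases Nat.eq_zero_or_pos i with rfl | h0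
    · simp [hi]
    · rw [Nat.mod_eq_of_lt (by omega : m - i < m), Nat.mod_eq_of_lt (by omega)]
      omega
  symm
  refine Finset.sum_nbij' (fun i => (m - i) % m) (fun i => (m - i) % m)
    (fun i hi => ?_) (fun i hi => ?_) (fun i hi => ?_) (fun i hi => ?_) (fun i hi => ?_)
  · simpa using (hinv i (by simpa using hi)).1
  · simpa using (hinv i (by simpa using hi)).1
  · exact (hinv i (by simpa using hi)).2.1
  · exact (hinv i (by simpa using hi)).2.1
  · have hi' : i < m := by simpa using hi
    obtain ⟨-, -, h⟩ := hinv i hi'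
    have hd : d ^ q ^ ((m - i) % m + i) = d := by
      rcases h with h | h <;> rw [h]
      · simp
      · exact hcard d
    rw [← trace_pow_card i (Γ ((m - i) % m) * d ^ q ^ ((m - i) % m) * x), ← hq]
    rw [mul_pow, mul_pow, ← pow_mul, ← pow_add, hd]
    simp only [qReverse, hi', if_true]
    congr 1
    ring

end Field

/-- The expansion of `y` in a family of full size that is trace-dual to some family `b`: duality
makes `g` linearly independent, hence spanning, and reads off the coefficients. -/
theorem sum_trace_smul_dual {Fq K : Type*} [Field Fq] [Field K] [Algebra Fq K] [Finite K] {m : ℕ}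
    (hm : Module.finrank Fq K = m) (b g : Fin m → K)
    (hdual : ∀ i j, Algebra.trace Fq K (b i * g j) = if i = j then 1 else 0) (y : K) :
    ∑ j, Algebra.trace Fq K (b j * y) • g j = y := by
  have key : ∀ (c : Fin m → Fq) (i : Fin m),
      Algebra.trace Fq K (b i * ∑ j, c j • g j) = c i := by
    intro c i
    simp [Finset.mul_sum, map_sum, hdual]
  have hli : LinearIndependent Fq g := by
    rw [Fintype.linearIndependent_iff]
    intro c hc i
    rw [← key c i, hc]
    simp
  have hspan : y ∈ Submodule.span Fq (Set.range g) := by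
    rw [hli.span_eq_top_of_card_eq_finrank' (by simp [hm])]
    trivial
  obtain ⟨c, rfl⟩ := (Submodule.mem_span_range_iff_exists_fun Fq).1 hspan
  simp only [key]

theorem transformed_key_equation
    (Fq K : Type) [Field Fq] [Fintype Fq] [Field K] [Fintype K] [Algebra Fq K]
    (q m s : ℕ) (hq : q = Fintype.card Fq) (hm : Module.finrank Fq K = m)
    -- β generates a normal basis, β⊥ its trace-dual normal basis; g_j = (β⊥)^{q^j}
    (β β' : K)
    (hβ : LinearIndependent Fq (fun i : Fin m => β ^ q ^ (i : ℕ)))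
    (hdual : ∀ i j : Fin m,
      Algebra.trace Fq K (β ^ q ^ (i : ℕ) * β' ^ q ^ (j : ℕ)) = if i = j then 1 else 0)
    -- error decomposition e⁽ⁱ⁾ = a⁽ⁱ'ᴿ⁾·B⁽ⁱ'ᴿ⁾ + a⁽ⁱ'ᶜ⁾·B⁽ᶜ⁾ + a⁽ⁱ'ᴱ⁾·B⁽ᴱ⁾
    (ρ : Fin s → ℕ) (γ t : ℕ)
    (aR : (i : Fin s) → Fin (ρ i) → K) (BR : (i : Fin s) → Matrix (Fin (ρ i)) (Fin m) Fq)
    (aC : Fin s → Fin γ → K) (BC : Matrix (Fin γ) (Fin m) Fq)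
    (aE : Fin s → Fin t → K) (BE : Matrix (Fin t) (Fin m) Fq)
    (e : Fin s → Fin m → K)
    (he : ∀ i j, e i j = (∑ l, BR i l j • aR i l) + (∑ l, BC l j • aC i l)
      + (∑ l, BE l j • aE i l))
    -- d⁽ᶜ⁾_l = ∑_j B⁽ᶜ⁾_{l,j} β^{q^j}
    (dC : Fin γ → K) (hdC : ∀ l, dC l = ∑ j : Fin m, BC l j • β ^ q ^ (j : ℕ))
    -- ẽ⁽ⁱ⁾ : the linearized interpolation polynomial of e⁽ⁱ⁾, of q-degree < n = m
    (et : Fin s → ℕ → K) (hetdeg : ∀ i j, m ≤ j → et i j = 0)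
    (hetval : ∀ i (j : Fin m), qEval q (et i) (β' ^ q ^ (j : ℕ)) = e i j)
    -- Γ⁽ᶜ⁾ : nonzero annihilator of the d⁽ᶜ⁾_l of smallest q-degree
    (Γ : ℕ → K) (hΓne : Γ ≠ 0) (hΓdeg : ∀ j, m ≤ j → Γ j = 0)
    (hΓann : ∀ l, qEval q Γ (dC l) = 0)
    (hΓmin : ∀ Γ' : ℕ → K, Γ' ≠ 0 → (∃ D, ∀ j, D ≤ j → Γ' j = 0) →
      (∀ l, qEval q Γ' (dC l) = 0) → qDegree Γ ≤ qDegree Γ')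
    -- Λ⁽ⁱ'ᴿ⁾ : nonzero annihilator of the a⁽ⁱ'ᴿ⁾_l of smallest q-degree
    (ΛR : Fin s → ℕ → K) (hΛRne : ∀ i, ΛR i ≠ 0)
    (hΛRfin : ∀ i, ∃ D, ∀ j, D ≤ j → ΛR i j = 0)
    (hΛRann : ∀ i l, qEval q (ΛR i) (aR i l) = 0)
    (hΛRmin : ∀ i, ∀ Λ' : ℕ → K, Λ' ≠ 0 → (∃ D, ∀ j, D ≤ j → Λ' j = 0) →
      (∀ l, qEval q Λ' (aR i l) = 0) → qDegree (ΛR i) ≤ qDegree Λ')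
    -- Λ⁽ⁱ'ᴱ⁾ : nonzero annihilator of the Λ⁽ⁱ'ᴿ⁾(a⁽ⁱ'ᴱ⁾_l) of smallest q-degree
    (ΛE : Fin s → ℕ → K) (hΛEne : ∀ i, ΛE i ≠ 0)
    (hΛEfin : ∀ i, ∃ D, ∀ j, D ≤ j → ΛE i j = 0)
    (hΛEann : ∀ i l, qEval q (ΛE i) (qEval q (ΛR i) (aE i l)) = 0)
    (hΛEmin : ∀ i, ∀ Λ' : ℕ → K, Λ' ≠ 0 → (∃ D, ∀ j, D ≤ j → Λ' j = 0) →
      (∀ l, qEval q Λ' (qEval q (ΛR i) (aE i l)) = 0) → qDegree (ΛE i) ≤ qDegree Λ') :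
    ∀ i, ∀ x : K,
      qEval q (ΛE i) (qEval q (ΛR i) (qEval q (et i) (qEval q (qReverse q m Γ) x))) = 0 := by
  intro i x
  obtain ⟨fE, hfE⟩ := qEval_linear q hq (ΛE i) (hΛEfin i)
  obtain ⟨fR, hfR⟩ := qEval_linear q hq (ΛR i) (hΛRfin i)
  obtain ⟨fe, hfe⟩ := qEval_linear q hq (et i) ⟨m, hetdeg i⟩
  set y := qEval q (qReverse q m Γ) x with hy
  have hC : ∀ l, ∑ j : Fin m, Algebra.trace Fq K (β ^ q ^ (j : ℕ) * y) * BC l j = 0 := by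
    intro l
    have h := trace_qEval_mul q m hq hm Γ hΓdeg (dC l) x
    rw [hΓann, zero_mul, map_zero, ← hy, hdC, Finset.sum_mul, map_sum] at h
    rw [h]
    refine Finset.sum_congr rfl fun j _ => ?_
    rw [smul_mul_assoc, map_smul, smul_eq_mul, mul_comm]
  -- Reordering the double sum collects the coefficient of each `v l`.
  have hswap : ∀ {n : ℕ} (B : Matrix (Fin n) (Fin m) Fq) (v : Fin n → K),
      ∑ j : Fin m, Algebra.trace Fq K (β ^ q ^ (j : ℕ) * y) • ∑ l, B l j • v l
        = ∑ l, (∑ j : Fin m, Algebra.trace Fq K (β ^ q ^ (j : ℕ) * y) * B l j) • v l := by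
    intro n B v
    simp only [Finset.smul_sum, Finset.sum_smul, smul_smul]
    exact Finset.sum_comm
  have hval : fe y = ∑ j : Fin m, Algebra.trace Fq K (β ^ q ^ (j : ℕ) * y) • e i j := by
    conv_lhs => rw [← sum_trace_smul_dual hm _ _ hdual y]
    simp only [map_sum, map_smul]
    exact Finset.sum_congr rfl fun j _ => by rw [← hfe, hetval]
  have hR : ∀ l, fR (aR i l) = 0 := fun l => by rw [← hfR, hΛRann]
  have hE : ∀ l, fE (fR (aE i l)) = 0 := fun l => by rw [← hfR, ← hfE, hΛEann]
  rw [hfe, hfR, hfE, hval]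
  simp only [he, smul_add, Finset.sum_add_distrib, hswap, hC, map_add, map_sum, map_smul, hR, hE,
    zero_smul, smul_zero, map_zero, Finset.sum_const_zero, add_zero]
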